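/- Let c > 1. Then there exists no global solution for c. -/

import Mathlib

/-!
Convexity gives `u₁₁, u₂₂ ≥ 0`, and `u₁₁ u₂₂ ≥ det D²u = c`, so at no point of `Q` can `u₁₁` and
`u₂₂` both be smaller than `√c`. Fix `1 < A < A + 2ε < √c` and compare `u` with the quadratics `A |x|²/2 + b x₁x₂`, in which `x₁x₂` is
harmonic and vanishes on `∂Q`. Convexity along the segment from `(x₁ + x₂, 0)` to `(0, x₁ + x₂)`
gives `u ≤ (x₁ + x₂)²/2`, so
`G(x) = (u(x) - A |x|²/2) / (x₁x₂) ≤ 1 - (A - 1) |x|² / (2 x₁x₂)`.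
Hence `b = sup G` is finite, and points where `G` is close to `b` stay in a fixed sector well inside
`Q`; since the ball around such a point `x₀` can be taken of radius comparable to `|x₀|`, it does not
matter whether these points tend to `0` or to `∞`. If `x₀` is such a point, the
function `A |x|²/2 + b x₁x₂ - u ≥ 0` on `Q` is small at `x₀` relative to `|x₀|²`, and adding
`ε |x - x₀|²` produces an interior minimum in a ball around `x₀`. There
`u₁₁, u₂₂ ≤ A + 2ε < √c`, a contradiction.
-/

noncomputable section

open Set Metric

/-- The Euclidean plane ℝ². -/
abbrev E2 : Type := EuclideanSpace ℝ (Fin 2)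

/-- First partial derivative ∂_i. -/
def pd (i : Fin 2) (f : E2 → ℝ) : E2 → ℝ := fun x => fderiv ℝ f x (EuclideanSpace.single i 1)

/-- Second partial derivative ∂_i ∂_j. -/
def pd2 (i j : Fin 2) (f : E2 → ℝ) : E2 → ℝ := pd i (pd j f)

/-- The open first quadrant Q. -/
def Qset : Set E2 := {x | 0 < x 0 ∧ 0 < x 1}

/-- q(x) = |x|²/2. -/
def qfun (x : E2) : ℝ := ‖x‖ ^ 2 / 2

/-- The Monge–Ampère operator det D²u = u₁₁ u₂₂ − u₁₂². -/
def MA (u : E2 → ℝ) (x : E2) : ℝ := pd2 0 0 u x * pd2 1 1 u x - (pd2 0 1 u x) ^ 2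

/-- P_c^+(x) = ½x₁² + ½x₂² + √(1−c) x₁x₂. -/
def Pplus (c : ℝ) (x : E2) : ℝ := x 0 ^ 2 / 2 + x 1 ^ 2 / 2 + Real.sqrt (1 - c) * (x 0 * x 1)

/-- P_c^-(x) = ½x₁² + ½x₂² − √(1−c) x₁x₂. -/
def Pminus (c : ℝ) (x : E2) : ℝ := x 0 ^ 2 / 2 + x 1 ^ 2 / 2 - Real.sqrt (1 - c) * (x 0 * x 1)

/-- β_c^- = π / arccos(−√(1−c)). -/
def betam (c : ℝ) : ℝ := Real.pi / Real.arccos (-(Real.sqrt (1 - c)))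

/-- A global solution (without the sign condition u ≥ 0): u is continuous and convex on Q̄,
smooth in Q, its first and second partial derivatives extend continuously to Q̄ \ {0},
det D²u = c in Q, and u = q on ∂Q. -/
structure IsGlobalSolutionNS (c : ℝ) (u : E2 → ℝ) : Prop where
  cont : ContinuousOn u (closure Qset)
  conv : ConvexOn ℝ (closure Qset) u
  smooth : ContDiffOn ℝ (⊤ : ℕ∞) u Qset
  ext1 : ∀ i : Fin 2, ∃ g : E2 → ℝ, ContinuousOn g (closure Qset \ {0}) ∧ ∀ x ∈ Qset, g x = pd i u x
  ext2 : ∀ i j : Fin 2, ∃ g : E2 → ℝ, ContinuousOn g (closure Qset \ {0}) ∧ ∀ x ∈ Qset, g x = pd2 i j u x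
  ma : ∀ x ∈ Qset, MA u x = c
  bdry : ∀ x ∈ frontier Qset, u x = qfun x

/-- A global solution: additionally u ≥ 0 on Q̄. -/
structure IsGlobalSolution (c : ℝ) (u : E2 → ℝ) extends IsGlobalSolutionNS c u : Prop where
  nonneg : ∀ x ∈ closure Qset, 0 ≤ u x

open Filter Topology

lemma isOpen_Qset : IsOpen Qset := by
  have h0 : Continuous fun x : E2 => x 0 := by fun_prop
  have h1 : Continuous fun x : E2 => x 1 := by fun_prop
  exact (isOpen_lt continuous_const h0).inter (isOpen_lt continuous_const h1)

lemma axis0_mem_frontier {s : ℝ} (hs : 0 < s) : !₂[s, 0] ∈ frontier Qset := by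
  rw [frontier, isOpen_Qset.interior_eq]
  refine ⟨?_, fun h => by simpa using h.2⟩
  have hc : Continuous fun t : ℝ => (!₂[s, t] : E2) := by fun_prop
  refine map_mem_closure (f := fun t : ℝ => (!₂[s, t] : E2)) hc (s := Ioi 0) (x := 0) (by simp) fun t ht => ?_
  exact ⟨by simpa using hs, by simpa using ht⟩

lemma axis1_mem_frontier {s : ℝ} (hs : 0 < s) : !₂[0, s] ∈ frontier Qset := by
  rw [frontier, isOpen_Qset.interior_eq]
  refine ⟨?_, fun h => by simpa using h.1⟩
  have hc : Continuous fun t : ℝ => (!₂[t, s] : E2) := by fun_prop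
  refine map_mem_closure (f := fun t : ℝ => (!₂[t, s] : E2)) hc (s := Ioi 0) (x := 0) (by simp) fun t ht => ?_
  exact ⟨by simpa using ht, by simpa using hs⟩

/-- Convexity on the segment joining `(x₁ + x₂, 0)` to `(0, x₁ + x₂)`. -/
lemma IsGlobalSolutionNS.le_sq {c : ℝ} {u : E2 → ℝ} (h : IsGlobalSolutionNS c u) {x : E2}
    (hx : x ∈ Qset) : u x ≤ (x 0 + x 1) ^ 2 / 2 := by
  obtain ⟨h0, h1⟩ := hx
  set s := x 0 + x 1 with hs
  have hs0 : 0 < s := by positivity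
  have ha := axis0_mem_frontier hs0
  have hb := axis1_mem_frontier hs0
  have ht0 : 0 ≤ x 0 / s := by positivity
  have ht1 : 0 ≤ x 1 / s := by positivity
  have hsum : x 0 / s + x 1 / s = 1 := by rw [← add_div, ← hs, div_self hs0.ne']
  have key := h.conv.2 (frontier_subset_closure ha) (frontier_subset_closure hb) ht0 ht1 hsum
  have hxeq : (x 0 / s) • (!₂[s, 0] : E2) + (x 1 / s) • (!₂[0, s] : E2) = x := by
    ext i
    fin_cases i <;> simp [hs0.ne']
  rw [hxeq, h.bdry _ ha, h.bdry _ hb] at key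
  have e : x 0 / s * (s ^ 2 / 2) + x 1 / s * (s ^ 2 / 2) = s ^ 2 / 2 := by
    field_simp
    exact hs.symm
  simpa [qfun, EuclideanSpace.norm_sq_eq, e] using key

/-- Necessary second-order condition at a local minimum. -/
lemma second_deriv_nonneg {f f' : ℝ → ℝ} {m : ℝ} (hf : ∀ᶠ s in 𝓝 0, HasDerivAt f (f' s) s)
    (hf' : HasDerivAt f' m 0) (hmin : IsLocalMin f 0) : 0 ≤ m := by
  by_contra! hm
  have hd : deriv f =ᶠ[𝓝 0] f' := hf.mono fun s hs => hs.deriv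
  have hdd : deriv (deriv f) 0 = m := by rw [hd.deriv_eq, hf'.deriv]
  have hmax : IsLocalMax f 0 :=
    isLocalMax_of_deriv_deriv_neg (by rwa [hdd]) hmin.deriv_eq_zero hf.self_of_nhds.continuousAt
  -- A point that is both a local minimum and a local maximum has `f` constant around it.
  have hconst : f =ᶠ[𝓝 0] fun _ => f 0 := by
    filter_upwards [hmin, hmax] with s h1 h2 using le_antisymm h2 h1
  have : deriv (deriv f) 0 = 0 := by
    rw [hconst.deriv.deriv_eq]
    simp
  linarith

/-- The line through `y` in the direction `e_i`, parametrised by arc length from `y`. -/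
def line (y : E2) (i : Fin 2) (s : ℝ) : E2 := y + s • EuclideanSpace.single i 1

lemma hasDerivAt_line (y : E2) (i : Fin 2) (s : ℝ) :
    HasDerivAt (line y i) (EuclideanSpace.single i 1) s := by
  have := ((hasDerivAt_id s).smul_const (EuclideanSpace.single i (1 : ℝ) : E2)).const_add y
  rw [one_smul] at this
  exact this

lemma hasDerivAt_comp_line {f : E2 → ℝ} {y : E2} {i : Fin 2} {s : ℝ}
    (hf : DifferentiableAt ℝ f (line y i s)) :
    HasDerivAt (fun s => f (line y i s)) (pd i f (line y i s)) s :=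
  hf.hasFDerivAt.comp_hasDerivAt s (hasDerivAt_line y i s)

@[simp] lemma line_zero (y : E2) (i : Fin 2) : line y i 0 = y := by simp [line]

lemma eventually_line_mem {U : Set E2} {y : E2} (hU : U ∈ 𝓝 y) (i : Fin 2) :
    ∀ᶠ s in 𝓝 (0 : ℝ), line y i s ∈ U := by
  have : Tendsto (line y i) (𝓝 0) (𝓝 y) := by
    simpa using (hasDerivAt_line y i 0).continuousAt.tendsto
  exact this hU

section
variable {u : E2 → ℝ} (hu : ContDiffOn ℝ (⊤ : ℕ∞) u Qset) {y : E2} (hy : y ∈ Qset) (i : Fin 2)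
include hu hy

lemma eventually_hasDerivAt_line :
    ∀ᶠ s in 𝓝 (0 : ℝ), HasDerivAt (fun s => u (line y i s)) (pd i u (line y i s)) s := by
  filter_upwards [eventually_line_mem (isOpen_Qset.mem_nhds hy) i] with s hs
  exact hasDerivAt_comp_line
    ((hu.contDiffAt (isOpen_Qset.mem_nhds hs)).differentiableAt (by simp))

lemma hasDerivAt_pd_line :
    HasDerivAt (fun s => pd i u (line y i s)) (pd2 i i u y) 0 := by
  have h1 : ContDiffAt ℝ 1 (fderiv ℝ u) y :=
    (hu.contDiffAt (isOpen_Qset.mem_nhds hy)).fderiv_right (by norm_cast)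
  have h2 : DifferentiableAt ℝ (pd i u) y :=
    (h1.differentiableAt (by simp)).clm_apply (differentiableAt_const _)
  simpa [pd2] using hasDerivAt_comp_line (i := i) (s := 0) (by simpa using h2)

/-- If a one-variable quadratic with second derivative `k` minus `u` has a local minimum at `y`
along the direction `e_i`, then `u_ii(y) ≤ k`. -/
lemma pd2_le_of_isLocalMin {β k : ℝ}
    (hmin : IsLocalMin (fun s => β * s + k / 2 * s ^ 2 - u (line y i s)) 0) :
    pd2 i i u y ≤ k := by
  have := second_deriv_nonneg (f := fun s => β * s + k / 2 * s ^ 2 - u (line y i s))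
    (f' := fun s => β + k * s - pd i u (line y i s)) (m := k - pd2 i i u y) ?_ ?_ hmin
  · linarith
  · filter_upwards [eventually_hasDerivAt_line hu hy i] with s hs
    refine HasDerivAt.sub ?_ hs
    have := ((hasDerivAt_id s).const_mul β).add (((hasDerivAt_id s).pow 2).const_mul (k / 2))
    refine this.congr_deriv ?_
    simp
    ring
  · refine HasDerivAt.sub ?_ (hasDerivAt_pd_line hu hy i)
    simpa using ((hasDerivAt_id (0 : ℝ)).const_mul k).const_add β

lemma pd2_nonneg (hconv : ConvexOn ℝ (closure Qset) u) : 0 ≤ pd2 i i u y := by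
  obtain ⟨r, hr, hball⟩ := Metric.eventually_nhds_iff_ball.1
    ((eventually_hasDerivAt_line hu hy i).and (eventually_line_mem (isOpen_Qset.mem_nhds hy) i))
  have hg : ConvexOn ℝ (ball (0 : ℝ) r) (fun s => u (line y i s)) := by
    refine ⟨convex_ball _ _, fun a ha b hb p q hp hq hpq => ?_⟩
    have := hconv.2 (subset_closure (hball a ha).2) (subset_closure (hball b hb).2) hp hq hpq
    convert this using 2
    simp only [line, smul_add, smul_smul, add_smul, smul_eq_mul]
    have : y = p • y + q • y := by rw [← add_smul, hpq, one_smul]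
    nth_rewrite 1 [this]
    abel
  have hmono : MonotoneOn (fun s => pd i u (line y i s)) (ball (0 : ℝ) r) := by
    have := hg.monotoneOn_deriv fun s hs => (hball s hs).1.differentiableAt
    exact this.congr fun s hs => (hball s hs).1.deriv
  have hd := (hasDerivAt_pd_line hu hy i).hasDerivWithinAt (s := ball (0 : ℝ) r)
  rw [← hd.derivWithin (isOpen_ball.uniqueDiffWithinAt (mem_ball_self hr))]
  exact hmono.derivWithin_nonneg

end

/-- If `u` is touched from above at `y` by a quadratic `A |x|²/2 + b x₁x₂ + ε |x - x₀|²` then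
`det D²u(y) ≤ (A + 2ε)²`, whatever `b` is. -/
lemma MA_le_of_isLocalMin {u : E2 → ℝ} (hu : ContDiffOn ℝ (⊤ : ℕ∞) u Qset)
    (hconv : ConvexOn ℝ (closure Qset) u) {A b ε : ℝ} {x₀ y : E2} (hy : y ∈ Qset)
    (hmin : IsLocalMin (fun x : E2 => A * ((x 0 ^ 2 + x 1 ^ 2) / 2) + b * (x 0 * x 1)
      + ε * ((x 0 - x₀ 0) ^ 2 + (x 1 - x₀ 1) ^ 2) - u x) y) :
    MA u y ≤ (A + 2 * ε) ^ 2 := by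
  have h0 : pd2 0 0 u y ≤ A + 2 * ε := by
    refine pd2_le_of_isLocalMin hu hy 0 (β := A * y 0 + b * y 1 + 2 * ε * (y 0 - x₀ 0)) ?_
    filter_upwards [eventually_line_mem hmin 0] with s hs
    simp [line] at hs ⊢
    linarith
  have h1 : pd2 1 1 u y ≤ A + 2 * ε := by
    refine pd2_le_of_isLocalMin hu hy 1 (β := A * y 1 + b * y 0 + 2 * ε * (y 1 - x₀ 1)) ?_
    filter_upwards [eventually_line_mem hmin 1] with s hs
    simp [line] at hs ⊢
    linarith
  have n0 := pd2_nonneg hu hy 0 hconv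
  have n1 := pd2_nonneg hu hy 1 hconv
  have := mul_le_mul h0 h1 n1 (n0.trans h0)
  unfold MA
  nlinarith [sq_nonneg (pd2 0 1 u y)]

/-- A continuous `ψ ≥ 0` with `ψ(x₀) < ε ρ²` becomes, after adding `ε |x - x₀|²`, a function with
a local minimum inside the ball of radius `ρ`. -/
lemma exists_isLocalMin_penalized {ψ : E2 → ℝ} {x₀ : E2} {ε ρ : ℝ} (hρ : 0 < ρ)
    (hc : ContinuousOn ψ (closedBall x₀ ρ)) (hψ : ∀ x ∈ closedBall x₀ ρ, 0 ≤ ψ x)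
    (h0 : ψ x₀ < ε * ρ ^ 2) :
    ∃ y ∈ ball x₀ ρ, IsLocalMin (fun x => ψ x + ε * ‖x - x₀‖ ^ 2) y := by
  obtain ⟨y, hy, hmin⟩ := (isCompact_closedBall x₀ ρ).exists_isMinOn
    ⟨x₀, mem_closedBall_self hρ.le⟩
    (hc.add (f := ψ) (g := fun x => ε * ‖x - x₀‖ ^ 2) (by fun_prop))
  have hle : ψ y + ε * ‖y - x₀‖ ^ 2 ≤ ψ x₀ := by
    simpa using hmin (mem_closedBall_self hρ.le)
  have hyb : y ∈ ball x₀ ρ := by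
    rw [mem_ball]
    refine lt_of_le_of_ne hy fun he => ?_
    rw [← dist_eq_norm, he] at hle
    linarith [hψ y hy]
  exact ⟨y, hyb, hmin.isLocalMin (mem_of_superset (isOpen_ball.mem_nhds hyb) ball_subset_closedBall)⟩

lemma closedBall_half_subset {x₀ : E2} {m : ℝ} (hm : 0 < m) (h0 : m ≤ x₀ 0) (h1 : m ≤ x₀ 1) :
    closedBall x₀ (m / 2) ⊆ Qset := by
  intro x hx
  rw [mem_closedBall, dist_eq_norm] at hx
  have a0 := (PiLp.norm_apply_le (x - x₀) 0).trans hx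
  have a1 := (PiLp.norm_apply_le (x - x₀) 1).trans hx
  simp only [PiLp.sub_apply, Real.norm_eq_abs, abs_le] at a0 a1
  exact ⟨by linarith, by linarith⟩

/-- If c > 1 there is no global solution. -/
theorem stmt2 (c : ℝ) (hc : 1 < c) : ¬ ∃ u : E2 → ℝ, IsGlobalSolution c u := by
  rintro ⟨u, ⟨h⟩⟩
  obtain ⟨A, ε, hA, hε, hAε⟩ : ∃ A ε : ℝ, 1 < A ∧ 0 < ε ∧ (A + 2 * ε) ^ 2 < c := by
    have hr : 1 < √c := by rw [Real.lt_sqrt (by norm_num)]; simpa using hc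
    refine ⟨1 + (√c - 1) / 3, (√c - 1) / 6, by linarith, by linarith, ?_⟩
    nth_rewrite 3 [← Real.sq_sqrt (by linarith : (0 : ℝ) ≤ c)]
    apply pow_lt_pow_left₀ _ (by linarith) (by norm_num)
    linarith
  set G : E2 → ℝ := fun x => (u x - A * ((x 0 ^ 2 + x 1 ^ 2) / 2)) / (x 0 * x 1) with hG
  have hGmul : ∀ x ∈ Qset, u x = A * ((x 0 ^ 2 + x 1 ^ 2) / 2) + G x * (x 0 * x 1) := by
    rintro x ⟨h0, h1⟩
    simp only [hG]
    field_simp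
    ring
  have hGle : ∀ x ∈ Qset, G x * (x 0 * x 1) ≤ x 0 * x 1 - (A - 1) * (x 0 ^ 2 + x 1 ^ 2) / 2 := by
    intro x hx
    have := h.le_sq hx
    rw [hGmul x hx] at this
    linarith
  have hG1 : ∀ x ∈ Qset, G x ≤ 1 := by
    intro x hx
    have h01 : 0 < x 0 * x 1 := mul_pos hx.1 hx.2
    have := hGle x hx
    have : 0 ≤ (A - 1) * (x 0 ^ 2 + x 1 ^ 2) := mul_nonneg (by linarith) (by positivity)
    by_contra! hlt
    nlinarith
  have hbdd : BddAbove (G '' Qset) := ⟨1, by rintro _ ⟨x, hx, rfl⟩; exact hG1 x hx⟩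
  have hne : (G '' Qset).Nonempty := ⟨_, !₂[1, 1], by simp [Qset], rfl⟩
  set b := sSup (G '' Qset) with hb
  have hGb : ∀ x ∈ Qset, G x ≤ b := fun x hx => le_csSup hbdd ⟨x, hx, rfl⟩
  have hb1 : b ≤ 1 := csSup_le hne (by rintro _ ⟨x, hx, rfl⟩; exact hG1 x hx)
  -- Where `G ≥ b - 1`, the ratio of the two coordinates is at most `K`.
  set K := 2 * (2 - b) / (A - 1) with hK
  have hA1 : 0 < A - 1 := by linarith
  have hKpos : 0 < K := div_pos (by linarith) hA1
  set η := min 1 (ε / (4 * K)) with hη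
  have hηpos : 0 < η := lt_min one_pos (by positivity)
  have hηK : η * K ≤ ε / 4 := by
    calc η * K ≤ ε / (4 * K) * K := by gcongr; exact min_le_right _ _
      _ = ε / 4 := by field_simp
  obtain ⟨_, ⟨x₀, hx₀, rfl⟩, hlt⟩ := exists_lt_of_lt_csSup hne (show b - η < b by linarith)
  obtain ⟨p0, p1⟩ := hx₀
  have p01 : 0 < x₀ 0 * x₀ 1 := mul_pos p0 p1
  have hsector : x₀ 0 ^ 2 + x₀ 1 ^ 2 ≤ K * (x₀ 0 * x₀ 1) := by
    have h1 := hGle x₀ ⟨p0, p1⟩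
    have h2 : (b - 1) * (x₀ 0 * x₀ 1) ≤ G x₀ * (x₀ 0 * x₀ 1) :=
      mul_le_mul_of_nonneg_right (by linarith [min_le_left 1 (ε / (4 * K))]) p01.le
    rw [hK, div_mul_eq_mul_div, le_div_iff₀ hA1]
    linarith
  obtain ⟨m, hm, hm0, hm1, hmK⟩ :
      ∃ m, 0 < m ∧ m ≤ x₀ 0 ∧ m ≤ x₀ 1 ∧ x₀ 0 * x₀ 1 ≤ K * m ^ 2 := by
    rcases le_total (x₀ 0) (x₀ 1) with hle | hle
    · refine ⟨x₀ 0, p0, le_rfl, hle, ?_⟩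
      have : x₀ 1 ≤ K * x₀ 0 := by
        by_contra! hcon
        nlinarith [mul_lt_mul_of_pos_right hcon p1, sq_nonneg (x₀ 0)]
      nlinarith
    · refine ⟨x₀ 1, p1, hle, le_rfl, ?_⟩
      have : x₀ 0 ≤ K * x₀ 1 := by
        by_contra! hcon
        nlinarith [mul_lt_mul_of_pos_right hcon p0, sq_nonneg (x₀ 1)]
      nlinarith
  have hsub := closedBall_half_subset hm hm0 hm1
  obtain ⟨y, hy, hmin⟩ := exists_isLocalMin_penalized (x₀ := x₀) (ε := ε) (ρ := m / 2)
    (ψ := fun x => A * ((x 0 ^ 2 + x 1 ^ 2) / 2) + b * (x 0 * x 1) - u x) (by positivity)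
    (ContinuousOn.sub (by fun_prop) (h.cont.mono (hsub.trans subset_closure)))
    (fun x hx => by
      have hxQ := hsub hx
      have := mul_le_mul_of_nonneg_right (hGb x hxQ) (mul_pos hxQ.1 hxQ.2).le
      simp only [hGmul x hxQ]
      linarith)
    (by
      simp only [hGmul x₀ ⟨p0, p1⟩]
      have e1 : (b - G x₀) * (x₀ 0 * x₀ 1) < η * (x₀ 0 * x₀ 1) :=
        mul_lt_mul_of_pos_right (by linarith) p01
      have e2 : η * (x₀ 0 * x₀ 1) ≤ η * (K * m ^ 2) := by gcongr
      have e3 : η * K * m ^ 2 ≤ ε / 4 * m ^ 2 := by gcongr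
      linarith)
  have hyQ : y ∈ Qset := hsub (ball_subset_closedBall hy)
  have := MA_le_of_isLocalMin h.smooth h.conv (A := A) (b := b) (ε := ε) (x₀ := x₀) hyQ (by
    convert hmin using 2 with x
    simp only [EuclideanSpace.norm_sq_eq, Fin.sum_univ_two, PiLp.sub_apply, Real.norm_eq_abs, sq_abs]
    ring)
  rw [h.ma y hyQ] at this
  linarith
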